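/- arXiv:2506.13531 — 2 statements merged into one kernel-verified Lean document; each statement's English description precedes it below -/
import Mathlib

section
/- Let a : ℝ → ℝ be a continuous function, and define T : ℝ² → ℝ² by T(x) = R(a(‖x‖))·x, where R(θ) is the 2×2 rotation matrix with rows (cos θ, −sin θ) and (sin θ, cos θ). Then the pushforward of the standard Gaussian measure on ℝ² under T equals the standard Gaussian measure on ℝ². -/
open MeasureTheory ProbabilityTheory Matrix

/-- Acting by an orbit-wise constant group element preserves every invariant measure, provided the
group carries a left-invariant probability measure. -/
theorem measurePreserving_smul_of_invariant {G X : Type*} [Group G] [MeasurableSpace G]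
    [MeasurableMul G] [MeasurableSpace X] [MulAction G X] [MeasurableSMul₂ G X]
    (ν : Measure G) [IsProbabilityMeasure ν] [ν.IsMulLeftInvariant]
    (μ : Measure X) [SFinite μ] [SMulInvariantMeasure G X μ]
    {h : X → G} (hh : Measurable h) (hinv : ∀ (g : G) (x : X), h (g • x) = h x) :
    MeasurePreserving (fun x => h x • x) μ μ := by
  have hT : Measurable fun x => h x • x := hh.smul measurable_id
  refine ⟨hT, Measure.ext_of_lintegral _ fun f hf => ?_⟩
  have average {F : X → ENNReal} (hF : Measurable F) :
      ∫⁻ x, F x ∂μ = ∫⁻ x, ∫⁻ g, F (g • x) ∂ν ∂μ := by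
    rw [lintegral_lintegral_swap (by fun_prop)]
    simp [fun g : G => (measurePreserving_smul g μ).lintegral_comp hF]
  rw [lintegral_map hf hT, average (F := fun x => f (h x • x)) (hf.comp hT), average hf]
  refine lintegral_congr fun x => ?_
  simp only [hinv, smul_smul]
  exact lintegral_mul_left_eq_self (μ := ν) (fun g => f (g • x)) (h x)

/-- A rotation of the complex plane by an angle depending measurably on the modulus preserves the
standard Gaussian measure. -/
theorem map_exp_norm_smul_stdGaussian {a : ℝ → ℝ} (ha : Measurable a) :
    (stdGaussian ℂ).map (fun z => Circle.exp (a ‖z‖) • z) = stdGaussian ℂ := by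
  borelize Circle
  have : SMulInvariantMeasure Circle ℂ (stdGaussian ℂ) :=
    ⟨fun c s hs => by
      conv_rhs => rw [← stdGaussian_map (rotation c)]
      rw [Measure.map_apply (by fun_prop) hs]
      rfl⟩
  let ν : Measure Circle := Measure.haarMeasure ⊤
  have : IsProbabilityMeasure ν := ⟨Measure.haarMeasure_self⟩
  refine (measurePreserving_smul_of_invariant ν (stdGaussian ℂ)
    (h := fun z => Circle.exp (a ‖z‖)) ?_ fun c z => by rw [Circle.norm_smul]).map_eq
  exact Circle.exp.continuous.measurable.comp (ha.comp measurable_norm)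

/-- The real and imaginary parts of a standard complex Gaussian are independent standard normals. -/
theorem map_measurableEquivPi_stdGaussian :
    (stdGaussian ℂ).map Complex.measurableEquivPi =
      Measure.pi fun _ : Fin 2 => gaussianReal 0 1 := by
  rw [stdGaussian_eq_map_pi_orthonormalBasis Complex.orthonormalBasisOneI,
    Measure.map_map (by fun_prop) (by fun_prop)]
  convert Measure.map_id
  ext x i
  fin_cases i <;> simp

/-- Rotation by an angle depending on the distance to the origin preserves the
standard bivariate Gaussian measure: for continuous `a : ℝ → ℝ` and
`T x = R (a ‖x‖) x`, with `R θ` the 2×2 rotation matrix and `‖x‖` the Euclidean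
norm `√(x₀² + x₁²)`, the pushforward of the standard Gaussian measure on `ℝ²`
(the 2-fold product of `N(0,1)`) under `T` is the standard Gaussian measure. -/
theorem stmt_8 (a : ℝ → ℝ) (ha : Continuous a)
    (R : ℝ → Matrix (Fin 2) (Fin 2) ℝ)
    (hR : ∀ θ, R θ = !![Real.cos θ, -Real.sin θ; Real.sin θ, Real.cos θ]) :
    (Measure.pi (fun _ : Fin 2 => gaussianReal 0 1)).map
        (fun x : Fin 2 → ℝ => (R (a (Real.sqrt (x 0 ^ 2 + x 1 ^ 2)))).mulVec x)
      = Measure.pi (fun _ : Fin 2 => gaussianReal 0 1) := by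
  rw [← map_measurableEquivPi_stdGaussian, Measure.map_map ?_ (by fun_prop)]
  · conv_rhs => rw [← map_exp_norm_smul_stdGaussian ha.measurable,
      Measure.map_map (by fun_prop) (by
        exact (Circle.exp.continuous.comp (ha.comp continuous_norm)).smul continuous_id
          |>.measurable)]
    congr 1
    ext z i
    have hz : ‖z‖ = √(z.re ^ 2 + z.im ^ 2) := by
      rw [Complex.norm_def, Complex.normSq_apply, sq, sq]
    fin_cases i <;>
      simp [hR, vecHead, vecTail, Circle.smul_def, Circle.coe_exp, ← hz,
        Complex.exp_ofReal_mul_I_re, Complex.exp_ofReal_mul_I_im] <;> ring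
  · simp only [hR]
    refine Continuous.measurable (Continuous.matrix_mulVec ?_ continuous_id)
    refine continuous_matrix fun i j => ?_
    fin_cases i <;> fin_cases j <;> simp <;> fun_prop
end

section
/- Let Φ denote the cumulative distribution function of the standard normal distribution N(0,1), let Φ̃ : ℝⁿ → (0,1)ⁿ apply Φ coordinatewise, and let Q : ℝ → Matrix(n,n,ℝ) be a continuous function such that for every r ∈ ℝ the matrix Q(r) is orthogonal (Q(r)Q(r)ᵀ = Id) with det Q(r) = 1. Then the map u ↦ Φ̃( Q(‖Φ̃⁻¹(u)‖²)·Φ̃⁻¹(u) ) from (0,1)ⁿ to (0,1)ⁿ preserves the uniform probability measure on (0,1)ⁿ, i.e., its pushforward of the uniform measure on (0,1)ⁿ equals the uniform measure on (0,1)ⁿ. -/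
open MeasureTheory ProbabilityTheory Matrix

/-- The cdf of a probability measure without atoms is continuous. -/
lemma continuous_cdf_of_nullSingleton (μ : Measure ℝ) [IsProbabilityMeasure μ]
    (hμ : ∀ x, μ {x} = 0) : Continuous (cdf μ) := by
  refine continuous_iff_continuousAt.2 fun x => ?_
  rw [(monotone_cdf μ).continuousAt_iff_leftLim_eq_rightLim, StieltjesFunction.rightLim_eq]
  have h := (cdf μ).measure_singleton x
  rw [measure_cdf, hμ x, eq_comm, ENNReal.ofReal_eq_zero] at h
  exact le_antisymm ((monotone_cdf μ).leftLim_le le_rfl) (by linarith)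

/-- The cdf of a probability measure that charges every interval is strictly increasing. -/
lemma strictMono_cdf_of_volume_absolutelyContinuous (μ : Measure ℝ) [IsProbabilityMeasure μ]
    (hμ : volume ≪ μ) : StrictMono (cdf μ) := by
  intro x y hxy
  by_contra! hle
  have h : (cdf μ).measure (Set.Ioc x y) = 0 := by
    rw [StieltjesFunction.measure_Ioc, ENNReal.ofReal_eq_zero]
    linarith
  rw [measure_cdf] at h
  have hv := hμ h
  rw [Real.volume_Ioc, ENNReal.ofReal_eq_zero] at hv
  linarith

/-- The probability integral transform, for a continuous strictly increasing cdf. -/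
lemma map_cdf_eq_uniform (μ : Measure ℝ) [IsProbabilityMeasure μ]
    (hc : Continuous (cdf μ)) (hm : StrictMono (cdf μ)) :
    μ.map (cdf μ) = volume.restrict (Set.Ioo 0 1) := by
  have : IsFiniteMeasure (μ.map (cdf μ)) := Measure.isFiniteMeasure_map _ _
  have hpos : ∀ x, 0 < cdf μ x := fun x =>
    (cdf_nonneg μ (x - 1)).trans_lt (hm (by linarith))
  have hlt : ∀ x, cdf μ x < 1 := fun x =>
    (hm (show x < x + 1 by linarith)).trans_le (cdf_le_one μ (x + 1))
  refine Measure.ext_of_Iic _ _ fun a => ?_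
  rw [Measure.map_apply hc.measurable measurableSet_Iic, Measure.restrict_apply measurableSet_Iic]
  rcases le_or_gt a 0 with ha | ha
  · have h1 : cdf μ ⁻¹' Set.Iic a = ∅ := by
      ext x
      simpa using ha.trans_lt (hpos x)
    have h2 : Set.Iic a ∩ Set.Ioo 0 1 = ∅ := by
      ext x
      simp only [Set.mem_inter_iff, Set.mem_Iic, Set.mem_Ioo, Set.mem_empty_iff_false, iff_false]
      intro h
      linarith
    simp [h1, h2]
  rcases le_or_gt 1 a with ha1 | ha1
  · have h1 : cdf μ ⁻¹' Set.Iic a = Set.univ := by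
      ext x
      simpa using (hlt x).le.trans ha1
    have h2 : Set.Iic a ∩ Set.Ioo 0 1 = Set.Ioo 0 1 :=
      Set.inter_eq_right.2 fun x hx => hx.2.le.trans ha1
    simp [h1, h2]
  · obtain ⟨b, rfl⟩ : ∃ b, cdf μ b = a := mem_range_of_exists_le_of_exists_ge hc
      ((tendsto_cdf_atBot μ).eventually_le_const ha).exists
      ((tendsto_cdf_atTop μ).eventually_const_le ha1).exists
    have h1 : cdf μ ⁻¹' Set.Iic (cdf μ b) = Set.Iic b := by
      ext x
      simp [hm.le_iff_le]
    have h2 : Set.Iic (cdf μ b) ∩ Set.Ioo 0 1 = Set.Ioc 0 (cdf μ b) := by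
      ext x
      simp only [Set.mem_inter_iff, Set.mem_Iic, Set.mem_Ioo, Set.mem_Ioc]
      exact ⟨fun h => ⟨h.2.1, h.1⟩, fun h => ⟨h.2, h.1, h.2.trans_lt ha1⟩⟩
    rw [h1, h2, Real.volume_Ioc, sub_zero, ofReal_cdf]

/-- An orthogonal matrix preserves the sum of the squares of the coordinates. -/
lemma sum_sq_mulVec_of_orthogonal {ι : Type*} [Fintype ι] [DecidableEq ι]
    {A : Matrix ι ι ℝ} (hA : A * Aᵀ = 1) (x : ι → ℝ) :
    ∑ j, (A *ᵥ x) j ^ 2 = ∑ j, x j ^ 2 := by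
  have h : (A *ᵥ x) ⬝ᵥ (A *ᵥ x) = x ⬝ᵥ x := by
    rw [dotProduct_mulVec, vecMul_mulVec, mul_eq_one_comm.1 hA, vecMul_one]
  simpa [dotProduct, sq] using h

/-- An orthogonal matrix preserves the product of standard Gaussian measures. -/
lemma measurePreserving_mulVec_pi_gaussianReal {ι : Type*} [Fintype ι] [DecidableEq ι]
    {A : Matrix ι ι ℝ} (hA : A * Aᵀ = 1) :
    MeasurePreserving (fun x : ι → ℝ => A *ᵥ x)
      (Measure.pi fun _ => gaussianReal 0 1) (Measure.pi fun _ => gaussianReal 0 1) := by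
  let L : EuclideanSpace ℝ ι →ₗᵢ[ℝ] EuclideanSpace ℝ ι :=
    { toLinearMap := Matrix.toLpLin 2 2 A
      norm_map' := fun x => by
        rw [← sq_eq_sq₀ (norm_nonneg _) (norm_nonneg _), EuclideanSpace.real_norm_sq_eq,
          EuclideanSpace.real_norm_sq_eq]
        exact sum_sq_mulVec_of_orthogonal hA x.ofLp }
  let e := L.toLinearIsometryEquiv rfl
  have hof : Measurable (WithLp.ofLp : EuclideanSpace ℝ ι → ι → ℝ) := by fun_prop
  have hto : Measurable (WithLp.toLp 2 : (ι → ℝ) → EuclideanSpace ℝ ι) := by fun_prop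
  have hstd : (stdGaussian (EuclideanSpace ℝ ι)).map WithLp.ofLp
      = Measure.pi fun _ => gaussianReal 0 1 := by
    rw [← map_pi_eq_stdGaussian, Measure.map_map hof hto]
    exact Measure.map_id
  have hmp := ((⟨hof, hstd⟩ : MeasurePreserving _ _ _).comp
    (⟨e.continuous.measurable, stdGaussian_map e⟩ : MeasurePreserving _ _ _)).comp
    (⟨hto, map_pi_eq_stdGaussian⟩ : MeasurePreserving _ _ _)
  exact hmp

/-- Choosing one of countably many measure-preserving maps according to a measurable label that
each of them leaves invariant gives a measure-preserving map. -/
lemma measurePreserving_piecewise_of_invariant {α κ : Type*} [MeasurableSpace α]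
    [MeasurableSpace κ] [Countable κ] [MeasurableSingletonClass κ] {μ : Measure α}
    {N : α → κ} (hN : Measurable N) {g : κ → α → α} (hg : ∀ k, MeasurePreserving (g k) μ μ)
    (hgN : ∀ k x, N (g k x) = N x) : MeasurePreserving (fun x => g (N x) x) μ μ := by
  have hcell : ∀ k, MeasurableSet (N ⁻¹' {k}) := fun k => hN (measurableSet_singleton k)
  have hdisj : Pairwise (Function.onFun Disjoint fun k => N ⁻¹' {k}) := fun i j hij =>
    Disjoint.preimage N (by simpa using hij)
  have hpre : ∀ S, (fun x => g (N x) x) ⁻¹' S = ⋃ k, g k ⁻¹' (S ∩ N ⁻¹' {k}) := by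
    intro S
    ext x
    simp [hgN]
  have hmeas : ∀ k {S}, MeasurableSet S → MeasurableSet (g k ⁻¹' (S ∩ N ⁻¹' {k})) :=
    fun k S hS => (hg k).measurable (hS.inter (hcell k))
  refine ⟨fun S hS => ?_, Measure.ext fun S hS => ?_⟩
  · rw [hpre]
    exact MeasurableSet.iUnion fun k => hmeas k hS
  · have hm : Measurable fun x => g (N x) x := fun S hS => by
      rw [hpre]
      exact MeasurableSet.iUnion fun k => hmeas k hS
    rw [Measure.map_apply hm hS, hpre, measure_iUnion _ fun k => hmeas k hS]
    · simp_rw [fun k => (hg k).measure_preimage (hS.inter (hcell k)).nullMeasurableSet]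
      rw [← measure_iUnion _ fun k => hS.inter (hcell k), ← Set.inter_iUnion]
      · congr 1
        ext x
        simp
      · exact fun i j hij => (hdisj hij).mono Set.inter_subset_right Set.inter_subset_right
    · intro i j hij
      refine Set.disjoint_left.2 fun x hi hj => hij ?_
      have h1 : N (g i x) = i := hi.2
      have h2 : N (g j x) = j := hj.2
      rw [← h1, ← h2, hgN, hgN]

/-- A pointwise limit of maps preserving a finite measure preserves it. -/
lemma measurePreserving_of_tendsto {α : Type*} [TopologicalSpace α] [MeasurableSpace α]
    [BorelSpace α] [HasOuterApproxClosed α] {μ : Measure α} [IsFiniteMeasure μ]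
    {F : ℕ → α → α} (hF : ∀ m, MeasurePreserving (F m) μ μ) {G : α → α} (hG : Measurable G)
    (hlim : ∀ x, Filter.Tendsto (fun m => F m x) Filter.atTop (nhds (G x))) :
    MeasurePreserving G μ μ := by
  refine ⟨hG, ?_⟩
  have : IsFiniteMeasure (μ.map G) := Measure.isFiniteMeasure_map _ _
  refine ext_of_forall_integral_eq_of_IsFiniteMeasure fun f => ?_
  have hf : Measurable f := f.continuous.measurable
  rw [integral_map hG.aemeasurable hf.aestronglyMeasurable]
  have hconst : ∀ m, ∫ x, f (F m x) ∂μ = ∫ x, f x ∂μ := fun m => by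
    rw [← integral_map (hF m).measurable.aemeasurable hf.aestronglyMeasurable, (hF m).map_eq]
  have h := tendsto_integral_of_dominated_convergence (μ := μ) (F := fun m x => f (F m x))
    (f := fun x => f (G x)) (fun _ => ‖f‖)
    (fun m => (hf.comp (hF m).measurable).aestronglyMeasurable) (integrable_const _)
    (fun m => Filter.Eventually.of_forall fun x => f.norm_coe_le_norm _)
    (Filter.Eventually.of_forall fun x => (f.continuous.tendsto _).comp (hlim x))
  simp_rw [hconst] at h
  exact tendsto_nhds_unique h tendsto_const_nhds

/-- Rotations depending continuously on the norm preserve the product of standard Gaussians. -/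
lemma measurePreserving_normDependent_rotation {ι : Type*} [Fintype ι] [DecidableEq ι]
    {Q : ℝ → Matrix ι ι ℝ} (hQ : Continuous Q) (hQorth : ∀ r, Q r * (Q r)ᵀ = 1) :
    MeasurePreserving (fun x : ι → ℝ => Q (∑ j, x j ^ 2) *ᵥ x)
      (Measure.pi fun _ => gaussianReal 0 1) (Measure.pi fun _ => gaussianReal 0 1) := by
  have hcont : Continuous fun x : ι → ℝ => Q (∑ j, x j ^ 2) *ᵥ x :=
    (hQ.comp (by fun_prop)).matrix_mulVec continuous_id
  refine measurePreserving_of_tendsto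
    (F := fun (m : ℕ) x => Q ((⌊(∑ j, x j ^ 2) * m⌋₊ : ℝ) / m) *ᵥ x) (fun m => ?_)
    hcont.measurable fun x => ?_
  · refine measurePreserving_piecewise_of_invariant (N := fun x : ι → ℝ => ⌊(∑ j, x j ^ 2) * m⌋₊)
      (g := fun (k : ℕ) x => Q (k / (m : ℝ)) *ᵥ x) ?_
      (fun k => measurePreserving_mulVec_pi_gaussianReal (hQorth _)) fun k x => ?_
    · exact Nat.measurable_floor.comp (by fun_prop)
    · simp only [sum_sq_mulVec_of_orthogonal (hQorth _)]
  · have h : Filter.Tendsto (fun m : ℕ => (⌊(∑ j, x j ^ 2) * m⌋₊ : ℝ) / m) Filter.atTop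
        (nhds (∑ j, x j ^ 2)) :=
      (tendsto_nat_floor_mul_div_atTop (Finset.sum_nonneg fun j _ => sq_nonneg (x j))).comp
        tendsto_natCast_atTop_atTop
    exact ((continuous_id.matrix_mulVec continuous_const).tendsto _).comp ((hQ.tendsto _).comp h)

/-- Corollary 3: conjugating a norm-dependent special orthogonal rotation by the
coordinatewise standard normal cdf `Φ` (with quantile function `Φinv`) yields a
transformation of `(0,1)ⁿ` preserving the uniform probability measure on
`(0,1)ⁿ`. -/
theorem stmt_9 (n : ℕ)
    (Φ : ℝ → ℝ) (hΦ : ∀ x, Φ x = ((gaussianReal 0 1) (Set.Iic x)).toReal)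
    (Φinv : ℝ → ℝ) (hΦinv : ∀ x, Φinv (Φ x) = x)
    (Q : ℝ → Matrix (Fin n) (Fin n) ℝ) (hQcont : Continuous Q)
    (hQorth : ∀ r, Q r * (Q r)ᵀ = 1) (hQdet : ∀ r, (Q r).det = 1) :
    (volume.restrict (Set.univ.pi fun _ : Fin n => Set.Ioo (0 : ℝ) 1)).map
        (fun u : Fin n → ℝ => fun i =>
          Φ ((Q (∑ j, (Φinv (u j)) ^ 2)).mulVec (fun j => Φinv (u j)) i))
      = volume.restrict (Set.univ.pi fun _ : Fin n => Set.Ioo (0 : ℝ) 1) := by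
  have hcdf : Φ = cdf (gaussianReal 0 1) := funext fun x => by
    rw [hΦ, cdf_eq_real, Measure.real]
  have hc : Continuous Φ := by
    have := nullSingletonClass_gaussianReal (μ := 0) (one_ne_zero (α := NNReal))
    exact hcdf ▸ continuous_cdf_of_nullSingleton _ fun x => measure_singleton x
  have hm : StrictMono Φ := hcdf ▸ strictMono_cdf_of_volume_absolutelyContinuous _
    (gaussianReal_absolutelyContinuous' 0 one_ne_zero)
  have hmap : (gaussianReal 0 1).map Φ = volume.restrict (Set.Ioo 0 1) := by
    rw [hcdf] at hc hm ⊢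
    exact map_cdf_eq_uniform _ hc hm
  have hemb : MeasurableEmbedding fun (x : Fin n → ℝ) i => Φ (x i) :=
    Continuous.measurableEmbedding (by fun_prop) fun x y h =>
      funext fun i => hm.injective (congrFun h i)
  have hpi : (Measure.pi fun _ : Fin n => gaussianReal 0 1).map (fun x i => Φ (x i))
      = volume.restrict (Set.univ.pi fun _ : Fin n => Set.Ioo (0 : ℝ) 1) := by
    have : ∀ _ : Fin n, SigmaFinite ((gaussianReal 0 1).map Φ) := fun _ => by
      rw [hmap]; infer_instance
    rw [Measure.pi_map_pi fun _ => hc.measurable.aemeasurable, hmap, volume_pi,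
      Measure.restrict_pi_pi]
  have hrot := measurePreserving_normDependent_rotation hQcont hQorth
  have hcomp : (fun u : Fin n → ℝ => fun i =>
        Φ ((Q (∑ j, (Φinv (u j)) ^ 2)).mulVec (fun j => Φinv (u j)) i)) ∘
      (fun (x : Fin n → ℝ) i => Φ (x i))
      = (fun (x : Fin n → ℝ) i => Φ (x i)) ∘ fun x => Q (∑ j, x j ^ 2) *ᵥ x := by
    funext x i
    simp [hΦinv]
  rw [← hpi, AEMeasurable.map_map_of_aemeasurable _ hemb.measurable.aemeasurable, hcomp,
    ← Measure.map_map hemb.measurable hrot.measurable, hrot.map_eq]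
  rw [hemb.aemeasurable_map_iff, hcomp]
  exact (hemb.measurable.comp hrot.measurable).aemeasurable
end
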